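/- With θ := 2d+1, for every s ∈ ℝ there exists L₀ ≥ 1 such that for all L ≥ L₀ and every z ∈ ℤ^d, the events { max_{x ∈ Q_{R_L,z}} Ξ_L(x) ≥ a_L^Ξ − s/a_L } and { max_{x ∈ Q_{R_L + r_L, z}} ξ_L(x) ≤ a_L − θ } are disjoint; that is, if the maximum of ξ_L over Q_{R_L+r_L,z} is at most a_L − θ, then the maximum of Ξ_L over Q_{R_L,z} is below a_L^Ξ − s/a_L. -/

import Mathlib

open MeasureTheory ProbabilityTheory Filter Finset

noncomputable section

/-- Euclidean (ℓ²) norm of a point of `ℤ^d`. -/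
def znorm {d : ℕ} (x : Fin d → ℤ) : ℝ := Real.sqrt (∑ i, ((x i : ℝ)) ^ 2)

/-- The discrete box `[-a/2, a/2]^d ∩ ℤ^d`. -/
def QBox (d : ℕ) (a : ℝ) : Finset (Fin d → ℤ) :=
  Finset.Icc (fun _ => Int.ceil (-(a / 2))) (fun _ => Int.floor (a / 2))

/-- The translated box `z + ([-a/2, a/2]^d ∩ ℤ^d)`. -/
def QBoxAt {d : ℕ} (a : ℝ) (z : Fin d → ℤ) : Finset (Fin d → ℤ) :=
  (QBox d a).image (fun x => z + x)

/-- The box `[-1,1]^d ⊂ ℝ^d`. -/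
def unitBox (d : ℕ) : Set (Fin d → ℝ) := Set.univ.pi fun _ => Set.Icc (-1) 1

/-- Nearest-neighbour adjacency on `ℤ^d`. -/
def Adj {d : ℕ} (x y : Fin d → ℤ) : Prop := (∑ i, |x i - y i|) = 1

instance {d : ℕ} (x y : Fin d → ℤ) : Decidable (Adj x y) := by
  unfold Adj; infer_instance

/-- `(lam, f)` is an eigenpair of the Anderson Hamiltonian `Δ + V` on `C ⊂ ℤ^d`
with Dirichlet boundary conditions (`f` vanishes outside `C`). -/
def IsDirichletEigenpair {d : ℕ} (C : Finset (Fin d → ℤ)) (V : (Fin d → ℤ) → ℝ)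
    (lam : ℝ) (f : (Fin d → ℤ) → ℝ) : Prop :=
  (∀ x ∉ C, f x = 0) ∧
  ∀ x ∈ C, ((∑ y ∈ C, if Adj x y then f y else 0) - 2 * (d : ℝ) * f x) + V x * f x = lam * f x

/-- `lam` is the largest Dirichlet eigenvalue of `Δ + V` on `C`. -/
def IsTopEigenvalue {d : ℕ} (C : Finset (Fin d → ℤ)) (V : (Fin d → ℤ) → ℝ) (lam : ℝ) : Prop :=
  (∃ f, f ≠ 0 ∧ IsDirichletEigenpair C V lam f) ∧
  ∀ mu g, g ≠ 0 → IsDirichletEigenpair C V mu g → mu ≤ lam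

/-- `(lam, f)` is the principal Dirichlet eigenvalue of `Δ + V` on `C` together with its
ℓ²-normalised nonnegative principal eigenfunction. -/
def IsPrincipalEigenpair {d : ℕ} (C : Finset (Fin d → ℤ)) (V : (Fin d → ℤ) → ℝ)
    (lam : ℝ) (f : (Fin d → ℤ) → ℝ) : Prop :=
  IsDirichletEigenpair C V lam f ∧ (∑ x ∈ C, f x ^ 2) = 1 ∧ (∀ x, 0 ≤ f x) ∧
  ∀ mu g, g ≠ 0 → IsDirichletEigenpair C V mu g → mu ≤ lam

/-- A complete orthonormal eigenbasis of `Δ + V` on `C` with Dirichlet boundary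
conditions, the eigenvalues being listed in nonincreasing order: `lam k` is the
`(k+1)`-th largest eigenvalue (with multiplicity) and `phi k` the associated
normalised eigenfunction. -/
def IsDirichletEigenbasis {d : ℕ} (C : Finset (Fin d → ℤ)) (V : (Fin d → ℤ) → ℝ)
    (lam : ℕ → ℝ) (phi : ℕ → (Fin d → ℤ) → ℝ) : Prop :=
  (∀ k < C.card, IsDirichletEigenpair C V (lam k) (phi k)) ∧
  (∀ j < C.card, ∀ k < C.card, j ≤ k → lam k ≤ lam j) ∧
  (∀ j < C.card, ∀ k < C.card, (∑ x ∈ C, phi j x * phi k x) = if j = k then 1 else 0)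

/-- Covariance of two real random variables. -/
def covar {Ω : Type} [MeasurableSpace Ω] (P : Measure Ω) (X Y : Ω → ℝ) : ℝ :=
  ∫ ω, (X ω - ∫ ω', X ω' ∂P) * (Y ω - ∫ ω', Y ω' ∂P) ∂P

/-- The basic setting of the paper: for each `L`, a centred stationary Gaussian field
`ξ_L` on `ℤ^d` with nonnegative covariance function `v_L`, `v_L(0) = 1`; `d_L` is defined
through `sup_{|x|=1} v_L(x) = 1 − 1/d_L` and `a_L > 0` through `P(ξ_L(0) > a_L) = L^{−d}`. -/
structure GaussSetting (d : ℕ) (Ω : Type) [MeasurableSpace Ω] where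
  P : Measure Ω
  hP : IsProbabilityMeasure P
  ξ : ℕ → Ω → (Fin d → ℤ) → ℝ
  v : ℕ → (Fin d → ℤ) → ℝ
  meas : ∀ L x, Measurable fun ω => ξ L ω x
  v_nonneg : ∀ L x, 0 ≤ v L x
  v_zero : ∀ L, v L 0 = 1
  gaussian : ∀ L, 2 ≤ L → ∀ (s : Finset (Fin d → ℤ)) (c : (Fin d → ℤ) → ℝ),
    Measure.map (fun ω => ∑ x ∈ s, c x * ξ L ω x) P
      = gaussianReal 0 (Real.toNNReal (∑ x ∈ s, ∑ y ∈ s, c x * c y * v L (x - y)))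
  dL : ℕ → ℝ
  dL_pos : ∀ L, 2 ≤ L → 0 < dL L
  dL_def : ∀ L, 2 ≤ L →
    IsGreatest {t : ℝ | ∃ x : Fin d → ℤ, znorm x = 1 ∧ t = v L x} (1 - 1 / dL L)
  aL : ℕ → ℝ
  aL_pos : ∀ L, 2 ≤ L → 0 < aL L
  aL_def : ∀ L, 2 ≤ L →
    P {ω | aL L < ξ L ω 0} = ENNReal.ofReal (1 / (L : ℝ) ^ d)

namespace GaussSetting

variable {d : ℕ} {Ω : Type} [MeasurableSpace Ω] (S : GaussSetting d Ω)

/-- The shape `S_L(x) = a_L (1 − v_L(x))`. -/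
def shape (L : ℕ) (x : Fin d → ℤ) : ℝ := S.aL L * (1 - S.v L x)

/-- Long-range decay assumption (I):
`sup_{|x| ≥ exp(√(ln L))} v_L(x) ln|x| → 0` as `L → ∞`. -/
def LongRangeDecay : Prop :=
  ∀ ε > (0 : ℝ), ∀ᶠ L : ℕ in atTop, ∀ x : Fin d → ℤ,
    Real.exp (Real.sqrt (Real.log L)) ≤ znorm x → S.v L x * Real.log (znorm x) ≤ ε

/-- Short-range decay assumption (II), with constants `c, c' > 0`. -/
def ShortRangeDecay (c c' : ℝ) : Prop :=
  0 < c ∧ 0 < c' ∧ ∀ L, 2 ≤ L → ∀ x : Fin d → ℤ, x ≠ 0 →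
    1 - Real.exp (c' * znorm x) / S.dL L ≤ S.v L x ∧ S.v L x ≤ 1 - c / S.dL L

/-- Assumption 1: `d_L ≪ a_L`. -/
def Assumption1 : Prop := Tendsto (fun L => S.dL L / S.aL L) atTop (nhds 0)

/-- The fluctuation field `ζ_{L,y}(x) = ξ_L(x) − ξ_L(y) v_L(x − y)`. -/
def zeta (L : ℕ) (y x : Fin d → ℤ) (ω : Ω) : ℝ :=
  S.ξ L ω x - S.ξ L ω y * S.v L (x - y)

/-- The field `Φ_L(y) = ∑_{x ∈ Q_{r_L}, x ≠ 0} φ̄_L(x)² ζ_{L,y}(x + y)`. -/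
def Phi (r : ℕ → ℝ) (phiBar : ℕ → (Fin d → ℤ) → ℝ) (L : ℕ) (y : Fin d → ℤ)
    (ω : Ω) : ℝ :=
  ∑ x ∈ (QBox d (r L)).erase 0, phiBar L x ^ 2 * S.zeta L y (x + y) ω

end GaussSetting

/-- The auxiliary mesoscopic data: the scales `r_L, R_L`, the principal eigenpair
`(λ̄_L, φ̄_L)` of `Δ − S_L` on `Q_{r_L}` and `τ_L` with `τ_L² = Var(Φ_L(0))`. -/
structure MesoData {d : ℕ} {Ω : Type} [MeasurableSpace Ω] (S : GaussSetting d Ω) where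
  rL : ℕ → ℝ
  RL : ℕ → ℝ
  lamBar : ℕ → ℝ
  phiBar : ℕ → (Fin d → ℤ) → ℝ
  tau : ℕ → ℝ
  rL_lower : ∀ L, 2 ≤ L → Real.log (S.aL L) ≤ Real.log (rL L)
  rL_upper : Tendsto (fun L => Real.log (rL L) / Real.sqrt (S.aL L)) atTop (nhds 0)
  RL_lower : Tendsto (fun L => S.aL L / Real.log (RL L)) atTop (nhds 0)
  RL_upper : Tendsto (fun L => Real.log (RL L) / (S.aL L * (S.aL L / S.dL L))) atTop (nhds 0)
  principal : ∀ L, 2 ≤ L →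
    IsPrincipalEigenpair (QBox d (rL L)) (fun x => -(S.shape L x)) (lamBar L) (phiBar L)
  tau_nonneg : ∀ L, 0 ≤ tau L
  tau_def : ∀ L, 2 ≤ L → tau L ^ 2 = variance (S.Phi rL phiBar L 0) S.P

/-- Assumption 2: `τ_L ≪ a_L^{-1} (a_L/d_L)^{1/2}`. -/
def Assumption2 {d : ℕ} {Ω : Type} [MeasurableSpace Ω] (S : GaussSetting d Ω)
    (M : MesoData S) : Prop :=
  Tendsto (fun L => S.aL L * M.tau L * Real.sqrt (S.dL L / S.aL L)) atTop (nhds 0)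

/-- The event `E¹_{L,x₀} = {|ξ_L(x₀) − a_L| < θ}`, `θ = 2d+1`. -/
def EventE1 {d : ℕ} {Ω : Type} [MeasurableSpace Ω] (S : GaussSetting d Ω) (L : ℕ)
    (x₀ : Fin d → ℤ) : Set Ω :=
  {ω | |S.ξ L ω x₀ - S.aL L| < 2 * (d : ℝ) + 1}

/-- The event `E²_{L,x₀} = {|ζ_{L,x₀}(x)| ≤ S_L(x−x₀)/10, ∀ x ∈ Q_{2R_L,x₀}}`. -/
def EventE2 {d : ℕ} {Ω : Type} [MeasurableSpace Ω] (S : GaussSetting d Ω) (RL : ℕ → ℝ)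
    (L : ℕ) (x₀ : Fin d → ℤ) : Set Ω :=
  {ω | ∀ x ∈ QBoxAt (2 * RL L) x₀, |S.zeta L x₀ x ω| ≤ S.shape L (x - x₀) / 10}

/-- The event `E³_{L,x₀}` controlling the fluctuation field on `Q_{R_L,x₀}`. -/
def EventE3 {d : ℕ} {Ω : Type} [MeasurableSpace Ω] (S : GaussSetting d Ω) (RL : ℕ → ℝ)
    (κ : ℝ) (L : ℕ) (x₀ : Fin d → ℤ) : Set Ω :=
  {ω | ∀ x ∈ QBoxAt (RL L) x₀, x ≠ x₀ →
    |S.zeta L x₀ x ω| ≤ Real.sqrt (variance (S.zeta L x₀ x) S.P) *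
      (S.aL L / S.dL L) ^ (κ * znorm (x - x₀)) *
      Real.sqrt (max 1 (|S.ξ L ω x₀ - S.aL L| * S.aL L))}

/-- The event `E_{L,x₀} = E¹ ∩ E² ∩ E³`. -/
def EventE {d : ℕ} {Ω : Type} [MeasurableSpace Ω] (S : GaussSetting d Ω) (RL : ℕ → ℝ)
    (κ : ℝ) (L : ℕ) (x₀ : Fin d → ℤ) : Set Ω :=
  EventE1 S L x₀ ∩ EventE2 S RL L x₀ ∩ EventE3 S RL κ L x₀

end

/-!
Since `ζ_{L,x}(x) = 0`, the excluded site `0` may be put back into `Φ_L(x)`, and as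
`∑ φ̄_L² = 1`,
`Ξ_L(x) = ∑_y φ̄_L(y)² (ξ_L(x) (1 - v_L(y)) + ξ_L(x + y))`.
If `ξ_L ≤ t` with `t ≤ a_L` on the box around `x`, then `v_L ≤ 1` bounds this average by
`t + ∑_y φ̄_L(y)² S_L(y)`. The potential energy `∑ φ̄_L² S_L` is at most `2d`: the principal
eigenvalue is at least the Rayleigh quotient `-2d` of the delta function at `0`, where `S_L`
vanishes, while the quadratic form of `Δ` is nonpositive. With `t = a_L - (2d + 1)` this gives
`Ξ_L(x) ≤ a_L - 1`, which is below `a_L - s / a_L` once `a_L > s`; and `a_L → ∞` because the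
standard Gaussian tail beyond `a_L` tends to zero.
-/

lemma sum_mul_sum_ite_le_of_card_filter_le {α R : Type*} [Field R] [LinearOrder R]
    [IsStrictOrderedRing R] {r : α → α → Prop} [DecidableRel r]
    (hr : ∀ x y, r x y → r y x) {C : Finset α} {D : ℕ} (hD : ∀ x ∈ C, #{y ∈ C | r x y} ≤ D)
    (f : α → R) :
    ∑ x ∈ C, f x * (∑ y ∈ C, if r x y then f y else 0) ≤ D * ∑ x ∈ C, f x ^ 2 := by
  have hswap : ∑ x ∈ C, ∑ y ∈ C, (if r x y then f y ^ 2 / 2 else 0)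
      = ∑ x ∈ C, ∑ y ∈ C, if r x y then f x ^ 2 / 2 else 0 := by
    rw [sum_comm]
    simp only [show ∀ x y, r x y ↔ r y x from fun x y => ⟨hr x y, hr y x⟩]
  calc ∑ x ∈ C, f x * (∑ y ∈ C, if r x y then f y else 0)
      ≤ ∑ x ∈ C, ∑ y ∈ C,
          ((if r x y then f x ^ 2 / 2 else 0) + if r x y then f y ^ 2 / 2 else 0) := by
        simp only [mul_sum]
        gcongr with x _ y _
        split_ifs
        · linarith [two_mul_le_add_sq (f x) (f y)]
        · simp
    _ = ∑ x ∈ C, (#{y ∈ C | r x y} : R) * f x ^ 2 := by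
        simp only [sum_add_distrib, hswap]
        rw [← sum_add_distrib]
        refine sum_congr rfl fun x _ => ?_
        rw [← sum_filter, sum_const, nsmul_eq_mul]
        ring
    _ ≤ D * ∑ x ∈ C, f x ^ 2 := by
        rw [mul_sum]
        gcongr with x hx
        exact hD x hx

open scoped ComplexOrder in
lemma re_diag_le_of_forall_eigenvalue_le {𝕜 n : Type*} [RCLike 𝕜] [Fintype n]
    {A : Matrix n n 𝕜} (hA : A.IsHermitian) {b : ℝ}
    (hb : ∀ (μ : ℝ) (w : n → 𝕜), w ≠ 0 → A.mulVec w = μ • w → μ ≤ b) (i : n) :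
    RCLike.re (A i i) ≤ b := by
  classical
  have hB : (b • (1 : Matrix n n 𝕜) - A).IsHermitian :=
    (Matrix.isHermitian_one.smul (IsSelfAdjoint.all b)).sub hA
  have hpos : (b • (1 : Matrix n n 𝕜) - A).PosSemidef := by
    refine hB.posSemidef_iff_eigenvalues_nonneg.2 fun j => ?_
    have hw := hB.mulVec_eigenvectorBasis j
    rw [Matrix.sub_mulVec, Matrix.smul_mulVec, Matrix.one_mulVec] at hw
    have hle : b - hB.eigenvalues j ≤ b :=
      hb _ (hB.eigenvectorBasis j) (by simpa using hB.eigenvectorBasis.orthonormal.ne_zero j)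
        (by rw [sub_smul, ← hw, sub_sub_cancel])
    simpa using hle
  have hdiag := (RCLike.nonneg_iff.1 (hpos.diag_nonneg (i := i))).1
  simpa [RCLike.smul_re] using hdiag

lemma tendsto_atTop_of_tendsto_measure_Ioi {ι α : Type*} [LinearOrder α] [NoMaxOrder α]
    [TopologicalSpace α] [OrderTopology α] [MeasurableSpace α] (μ : Measure α)
    [μ.IsOpenPosMeasure] {l : Filter ι} {f : ι → α}
    (h : Tendsto (fun i => μ (Set.Ioi (f i))) l (nhds 0)) : Tendsto f l atTop := by
  refine tendsto_atTop.2 fun K => ?_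
  have hK : 0 < μ (Set.Ioi K) := isOpen_Ioi.measure_pos μ Set.nonempty_Ioi
  filter_upwards [h.eventually_lt_const hK] with i hi
  by_contra! hlt
  exact hi.not_ge (measure_mono (Set.Ioi_subset_Ioi hlt.le))

lemma isOpenPosMeasure_gaussianReal (m : ℝ) {v : NNReal} (hv : v ≠ 0) :
    (gaussianReal m v).IsOpenPosMeasure :=
  (gaussianReal_absolutelyContinuous' m hv).isOpenPosMeasure

section Dirichlet

variable {d : ℕ} {x y : Fin d → ℤ} {C : Finset (Fin d → ℤ)} {V f : (Fin d → ℤ) → ℝ} {lam : ℝ}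

lemma Adj.symm (h : Adj x y) : Adj y x := by
  simpa only [Adj, abs_sub_comm] using h

lemma Adj.exists_eq_add_single (h : Adj x y) :
    ∃ (i : Fin d) (u : ℤˣ), y = x + Pi.single i (u : ℤ) := by
  have hsum : ∑ i, (y i - x i).natAbs = 1 := by
    zify
    exact h.symm
  obtain ⟨i, hi⟩ := (Finsupp.sum_eq_one_iff
    (Finsupp.equivFunOnFinite.symm fun i => (y i - x i).natAbs)).1
    (by rwa [Finsupp.sum_fintype _ _ fun _ => rfl])
  have habs (j : Fin d) : (y j - x j).natAbs = Finsupp.single i 1 j := DFunLike.congr_fun hi j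
  have hunit : IsUnit (y i - x i) :=
    Int.isUnit_iff_natAbs_eq.2 ((habs i).trans Finsupp.single_eq_same)
  refine ⟨i, hunit.unit, funext fun j => ?_⟩
  obtain rfl | hj := eq_or_ne j i
  · simp
  · have hzero := habs j
    rw [Finsupp.single_eq_of_ne hj, Int.natAbs_eq_zero, sub_eq_zero] at hzero
    simp [hj, hzero]

lemma card_filter_adj_le (C : Finset (Fin d → ℤ)) (x : Fin d → ℤ) :
    #{y ∈ C | Adj x y} ≤ 2 * d := by
  have hsub : {y ∈ C | Adj x y} ⊆
      (univ : Finset (Fin d × ℤˣ)).image fun p => x + Pi.single p.1 (p.2 : ℤ) := by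
    intro y hy
    obtain ⟨i, u, rfl⟩ := (mem_filter.1 hy).2.exists_eq_add_single
    exact mem_image_of_mem _ (mem_univ (i, u))
  calc #{y ∈ C | Adj x y} ≤ Fintype.card (Fin d × ℤˣ) :=
        (card_le_card hsub).trans card_image_le
    _ = 2 * d := by rw [Fintype.card_prod, Fintype.card_fin, Fintype.card_units_int, mul_comm]

lemma IsDirichletEigenpair.mul_sum_sq_le (h : IsDirichletEigenpair C V lam f) :
    lam * ∑ x ∈ C, f x ^ 2 ≤ ∑ x ∈ C, V x * f x ^ 2 := by
  have hform := sum_mul_sum_ite_le_of_card_filter_le (fun _ _ => Adj.symm)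
    (fun x _ => card_filter_adj_le C x) f
  have henergy : lam * ∑ x ∈ C, f x ^ 2
      = ∑ x ∈ C, f x * (∑ y ∈ C, if Adj x y then f y else 0)
        - 2 * d * ∑ x ∈ C, f x ^ 2 + ∑ x ∈ C, V x * f x ^ 2 := by
    rw [mul_sum, mul_sum, ← sum_sub_distrib, ← sum_add_distrib]
    refine sum_congr rfl fun x hx => ?_
    linear_combination -f x * h.2 x hx
  push_cast at hform
  linarith

/-- The Anderson Hamiltonian `Δ + V` on `C` with Dirichlet boundary conditions, as a matrix indexed
by the sites of `C`, so that the spectral theorem for Hermitian matrices applies to it. -/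
def dirichletMatrix (C : Finset (Fin d → ℤ)) (V : (Fin d → ℤ) → ℝ) : Matrix C C ℝ :=
  Matrix.of (fun x y : C => if Adj x.1 y.1 then 1 else 0) +
    Matrix.diagonal fun x : C => V x - 2 * d

lemma isHermitian_dirichletMatrix (C : Finset (Fin d → ℤ)) (V : (Fin d → ℤ) → ℝ) :
    (dirichletMatrix C V).IsHermitian := by
  refine Matrix.IsHermitian.add (Matrix.IsHermitian.ext fun x y => ?_)
    (Matrix.isHermitian_diagonal _)
  exact if_congr ⟨Adj.symm, Adj.symm⟩ rfl rfl

lemma dirichletMatrix_apply_self (C : Finset (Fin d → ℤ)) (V : (Fin d → ℤ) → ℝ) (x : C) :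
    dirichletMatrix C V x x = V x - 2 * d := by
  simp [dirichletMatrix, Adj]

lemma dirichletMatrix_mulVec (C : Finset (Fin d → ℤ)) (V : (Fin d → ℤ) → ℝ)
    (w : C → ℝ) (x : C) :
    (dirichletMatrix C V).mulVec w x
      = (∑ y : C, if Adj x.1 y.1 then w y else 0) + (V x - 2 * d) * w x := by
  rw [dirichletMatrix, Matrix.add_mulVec, Pi.add_apply, Matrix.mulVec_diagonal]
  simp [Matrix.mulVec, dotProduct]

lemma isDirichletEigenpair_extend {μ : ℝ} {w : C → ℝ}
    (hw : (dirichletMatrix C V).mulVec w = μ • w) :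
    IsDirichletEigenpair C V μ (Function.extend Subtype.val w 0) := by
  have hext (x : C) : Function.extend Subtype.val w 0 x.1 = w x :=
    Subtype.val_injective.extend_apply w 0 x
  refine ⟨fun x hx => Function.extend_apply' _ _ _ (by simpa using hx), fun x hx => ?_⟩
  have hwx := congr_fun hw ⟨x, hx⟩
  rw [dirichletMatrix_mulVec, Pi.smul_apply, smul_eq_mul] at hwx
  rw [← sum_coe_sort C, hext ⟨x, hx⟩]
  simp only [hext]
  linear_combination hwx

lemma sub_le_of_forall_isDirichletEigenpair_le
    (h : ∀ μ g, g ≠ 0 → IsDirichletEigenpair C V μ g → μ ≤ lam) (hx : x ∈ C) :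
    V x - 2 * d ≤ lam := by
  rw [← dirichletMatrix_apply_self C V ⟨x, hx⟩]
  refine re_diag_le_of_forall_eigenvalue_le (isHermitian_dirichletMatrix C V)
    (fun μ w hw heig => ?_) _
  refine h μ _ (fun hzero => hw ?_) (isDirichletEigenpair_extend heig)
  rw [← Function.extend_comp Subtype.val_injective w 0, hzero]
  rfl

lemma IsPrincipalEigenpair.sub_le_sum_mul_sq (h : IsPrincipalEigenpair C V lam f)
    (hx : x ∈ C) : V x - 2 * d ≤ ∑ y ∈ C, V y * f y ^ 2 := by
  obtain ⟨heig, hnorm, -, hmax⟩ := h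
  calc V x - 2 * d ≤ lam := sub_le_of_forall_isDirichletEigenpair_le hmax hx
    _ = lam * ∑ y ∈ C, f y ^ 2 := by rw [hnorm, mul_one]
    _ ≤ ∑ y ∈ C, V y * f y ^ 2 := heig.mul_sum_sq_le

end Dirichlet

section Box

variable {d : ℕ} {a b : ℝ} {x y z : Fin d → ℤ}

lemma mem_QBox : x ∈ QBox d a ↔ ∀ i, -(a / 2) ≤ (x i : ℝ) ∧ (x i : ℝ) ≤ a / 2 := by
  simp only [QBox, mem_Icc, Pi.le_def, ← forall_and, Int.ceil_le, Int.le_floor]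

lemma zero_mem_QBox_of_nonempty (h : (QBox d a).Nonempty) : (0 : Fin d → ℤ) ∈ QBox d a := by
  obtain ⟨x, hx⟩ := h
  rw [mem_QBox] at hx ⊢
  intro i
  have hi := hx i
  rw [Pi.zero_apply, Int.cast_zero]
  constructor <;> linarith

lemma add_mem_QBoxAt (hy : y ∈ QBox d b) (hx : x ∈ QBoxAt a z) :
    y + x ∈ QBoxAt (a + b) z := by
  obtain ⟨w, hw, rfl⟩ := mem_image.1 hx
  refine mem_image.2 ⟨y + w, mem_QBox.2 fun i => ?_, by abel⟩
  have hwi := mem_QBox.1 hw i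
  have hyi := mem_QBox.1 hy i
  rw [Pi.add_apply, Int.cast_add]
  constructor <;> linarith

end Box

namespace GaussSetting

variable {d : ℕ} {Ω : Type} [MeasurableSpace Ω] (S : GaussSetting d Ω)

lemma map_ξ {L : ℕ} (hL : 2 ≤ L) (x : Fin d → ℤ) :
    S.P.map (fun ω => S.ξ L ω x) = gaussianReal 0 1 := by
  simpa [S.v_zero] using S.gaussian L hL {x} 1

lemma gaussianReal_Ioi_aL {L : ℕ} (hL : 2 ≤ L) :
    gaussianReal 0 1 (Set.Ioi (S.aL L)) = ENNReal.ofReal (1 / (L : ℝ) ^ d) := by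
  rw [← S.map_ξ hL 0, Measure.map_apply (S.meas L 0) measurableSet_Ioi]
  exact S.aL_def L hL

lemma tendsto_aL_atTop (hd : 1 ≤ d) : Tendsto S.aL atTop atTop := by
  have : (gaussianReal 0 1).IsOpenPosMeasure := isOpenPosMeasure_gaussianReal 0 one_ne_zero
  refine tendsto_atTop_of_tendsto_measure_Ioi (gaussianReal 0 1) ?_
  have hpow : Tendsto (fun L : ℕ => 1 / (L : ℝ) ^ d) atTop (nhds 0) :=
    tendsto_const_nhds.div_atTop
      ((tendsto_pow_atTop (by omega)).comp tendsto_natCast_atTop_atTop)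
  have htail := ENNReal.tendsto_ofReal hpow
  rw [ENNReal.ofReal_zero] at htail
  refine htail.congr' ?_
  filter_upwards [eventually_ge_atTop 2] with L hL
  exact (S.gaussianReal_Ioi_aL hL).symm

lemma ξ_add_Phi_eq {r : ℕ → ℝ} {φ : ℕ → (Fin d → ℤ) → ℝ} {L : ℕ}
    (hφ : ∑ y ∈ QBox d (r L), φ L y ^ 2 = 1) (x : Fin d → ℤ) (ω : Ω) :
    S.ξ L ω x + S.Phi r φ L x ω
      = ∑ y ∈ QBox d (r L), φ L y ^ 2 * (S.ξ L ω x * (1 - S.v L y) + S.ξ L ω (y + x)) := by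
  have hPhi : S.Phi r φ L x ω = ∑ y ∈ QBox d (r L), φ L y ^ 2 * S.zeta L x (y + x) ω :=
    sum_erase _ (by simp [zeta, S.v_zero])
  calc S.ξ L ω x + S.Phi r φ L x ω
      = ∑ y ∈ QBox d (r L), (φ L y ^ 2 * S.ξ L ω x + φ L y ^ 2 * S.zeta L x (y + x) ω) := by
        rw [sum_add_distrib, ← sum_mul, hφ, one_mul, hPhi]
    _ = ∑ y ∈ QBox d (r L), φ L y ^ 2 * (S.ξ L ω x * (1 - S.v L y) + S.ξ L ω (y + x)) := by
        refine sum_congr rfl fun y _ => ?_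
        rw [zeta, add_sub_cancel_right]
        ring

lemma ξ_add_Phi_le {r : ℕ → ℝ} {φ : ℕ → (Fin d → ℤ) → ℝ} {L : ℕ} {lam : ℝ}
    (hv : ∀ y, S.v L y ≤ 1)
    (hφ : IsPrincipalEigenpair (QBox d (r L)) (fun y => -S.shape L y) lam (φ L))
    {t : ℝ} (ht : t ≤ S.aL L) {x : Fin d → ℤ} {ω : Ω}
    (hξ : ∀ y ∈ QBox d (r L), S.ξ L ω (y + x) ≤ t) :
    S.ξ L ω x + S.Phi r φ L x ω ≤ t + 2 * d := by
  have hnorm := hφ.2.1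
  have h0 : (0 : Fin d → ℤ) ∈ QBox d (r L) :=
    zero_mem_QBox_of_nonempty (nonempty_of_sum_ne_zero (hnorm.trans_ne one_ne_zero))
  have hξx : S.ξ L ω x ≤ t := by simpa using hξ 0 h0
  have henergy : ∑ y ∈ QBox d (r L), φ L y ^ 2 * S.shape L y ≤ 2 * d := by
    simpa [shape, S.v_zero, mul_comm] using hφ.sub_le_sum_mul_sq h0
  calc S.ξ L ω x + S.Phi r φ L x ω
      = ∑ y ∈ QBox d (r L), φ L y ^ 2 * (S.ξ L ω x * (1 - S.v L y) + S.ξ L ω (y + x)) :=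
        S.ξ_add_Phi_eq hnorm x ω
    _ ≤ ∑ y ∈ QBox d (r L), φ L y ^ 2 * (S.shape L y + t) := by
        gcongr with y hy
        · exact mul_le_mul_of_nonneg_right (hξx.trans ht) (sub_nonneg.2 (hv y))
        · exact hξ y hy
    _ = t + ∑ y ∈ QBox d (r L), φ L y ^ 2 * S.shape L y := by
        simp only [mul_add, sum_add_distrib]
        rw [← sum_mul, hnorm]
        ring
    _ ≤ t + 2 * d := by gcongr

variable {S} in
lemma ShortRangeDecay.v_le_one {c c' : ℝ} (h : S.ShortRangeDecay c c') {L : ℕ} (hL : 2 ≤ L)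
    (x : Fin d → ℤ) : S.v L x ≤ 1 := by
  obtain ⟨hc, -, hdecay⟩ := h
  obtain rfl | hx := eq_or_ne x 0
  · exact (S.v_zero L).le
  · exact (hdecay L hL x hx).2.trans (sub_le_self _ (div_nonneg hc.le (S.dL_pos L hL).le))

end GaussSetting

theorem Xi_max_requires_large_xi_general
    {d : ℕ} (hd : 1 ≤ d) {Ω : Type} [MeasurableSpace Ω] (S : GaussSetting d Ω)
    (hv : ∀ L, 2 ≤ L → ∀ x, S.v L x ≤ 1) (M : MesoData S) :
    ∀ s : ℝ, ∃ L₀ : ℕ, ∀ L : ℕ, L₀ ≤ L → ∀ z : Fin d → ℤ, ∀ ω : Ω,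
      (∀ x ∈ QBoxAt (M.RL L + M.rL L) z, S.ξ L ω x ≤ S.aL L - (2 * (d : ℝ) + 1)) →
      ∀ x ∈ QBoxAt (M.RL L) z,
        S.ξ L ω x + S.Phi M.rL M.phiBar L x ω
          < S.aL L * Real.sqrt (1 + M.tau L ^ 2) - s / S.aL L := by
  intro s
  obtain ⟨L₀, hL₀⟩ := eventually_atTop.1
    (((S.tendsto_aL_atTop hd).eventually_gt_atTop s).and (eventually_ge_atTop 2))
  refine ⟨L₀, fun L hL z ω hξ x hx => ?_⟩
  obtain ⟨hs, hL2⟩ := hL₀ L hL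
  have ha : 0 < S.aL L := S.aL_pos L hL2
  calc S.ξ L ω x + S.Phi M.rL M.phiBar L x ω
      ≤ S.aL L - (2 * d + 1) + 2 * d :=
        S.ξ_add_Phi_le (hv L hL2) (M.principal L hL2) (sub_le_self _ (by positivity))
          fun y hy => hξ _ (add_mem_QBoxAt hy hx)
    _ = S.aL L - 1 := by ring
    _ < S.aL L - s / S.aL L := sub_lt_sub_left ((div_lt_one ha).2 hs) _
    _ ≤ S.aL L * Real.sqrt (1 + M.tau L ^ 2) - s / S.aL L := by
        gcongr
        exact le_mul_of_one_le_right ha.le (Real.one_le_sqrt.2 (by simp [sq_nonneg]))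

/-- Lemma 2.7 (i).
With `θ = 2d+1`: for every `s ∈ ℝ` there is `L₀` such that for all `L ≥ L₀` and every
`z ∈ ℤ^d`, if `max_{Q_{R_L+r_L,z}} ξ_L ≤ a_L − θ`, then
`max_{Q_{R_L,z}} Ξ_L < a_L^Ξ − s/a_L`, where `Ξ_L = ξ_L + Φ_L` and
`a_L^Ξ = a_L √(1+τ_L²)`. -/
theorem Xi_max_requires_large_xi
    {d : ℕ} (hd : 1 ≤ d) {Ω : Type} [MeasurableSpace Ω] (S : GaussSetting d Ω)
    (c c' : ℝ) (hSR : S.ShortRangeDecay c c')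
    (hLR : S.LongRangeDecay)
    (hA1 : S.Assumption1)
    (M : MesoData S) (hA2 : Assumption2 S M) :
    ∀ s : ℝ, ∃ L₀ : ℕ, ∀ L : ℕ, L₀ ≤ L → ∀ z : Fin d → ℤ, ∀ ω : Ω,
      (∀ x ∈ QBoxAt (M.RL L + M.rL L) z, S.ξ L ω x ≤ S.aL L - (2 * (d : ℝ) + 1)) →
      ∀ x ∈ QBoxAt (M.RL L) z,
        S.ξ L ω x + S.Phi M.rL M.phiBar L x ω
          < S.aL L * Real.sqrt (1 + M.tau L ^ 2) - s / S.aL L := by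
  exact Xi_max_requires_large_xi_general hd S (fun _ hL => hSR.v_le_one hL) M
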